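/- Let (T,f) be a Hubbard tree, let z₁ be the characteristic point of a periodic orbit of branch points of exact period n, with q ≥ 3 arms at each point of the orbit. Then the global arms at z₁ can be labelled G₀, G₁, …, G_{q−1} with c₀ ∈ G₀ and c₁ ∈ G₁, and writing L_i for the local arm contained in G_i: if the orbit is tame, then f^n sends L₀ to L₁, maps each global arm G₁,…,G_{q−2} homeomorphically onto its image inside G₂,…,G_{q−1} respectively, and sends L_{q−1} to L₀; if the orbit is evil, then f^n fixes L₀, maps each of G₁,…,G_{q−2} homeomorphically onto its image inside G₂,…,G_{q−1} respectively, and sends L_{q−1} to L₁, but some iterate f^k(G_{q−1}) with k ≤ n contains c₀. In particular, if the critical orbit is periodic, then its period strictly exceeds the exact period of every periodic branch point. -/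

import Mathlib

/- Common definitions for formalizing "Admissibility of kneading sequences and
structure of Hubbard trees for quadratic polynomials" by Bruin–Schleicher. -/

namespace HubbardTrees

/-- The symbols `0`, `1`, `*` used for itineraries and kneading sequences. -/
inductive Sym : Type
  | zero : Sym
  | one : Sym
  | star : Sym
deriving DecidableEq

/-- `A` is an arc in `X` joining `x` and `y` (a point if `x = y`, otherwise a
homeomorphic image of `[0,1]` with endpoints `x` and `y`). -/
def IsArcBetween {X : Type*} [TopologicalSpace X] (A : Set X) (x y : X) : Prop :=
  (x = y ∧ A = {x}) ∨
  (x ≠ y ∧ ∃ γ : Path x y, Topology.IsEmbedding ⇑γ ∧ Set.range ⇑γ = A)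

/-- The global arms at `x`: the connected components of `X \ {x}`. -/
def arms {X : Type*} [TopologicalSpace X] (x : X) : Set (Set X) :=
  {C | ∃ y, y ≠ x ∧ C = connectedComponentIn {x}ᶜ y}

/-- The global arm at `x` containing `y` (for `y ≠ x`): the component of `X \ {x}`
containing `y`.  Local arms at `x` being germs of global arms, we represent the local
arm at `x` pointing towards `y` by this set. -/
def armTo {X : Type*} [TopologicalSpace X] (x y : X) : Set X :=
  connectedComponentIn {x}ᶜ y

/-- `x` is an endpoint: it has exactly one arm. -/
def IsEndpoint {X : Type*} [TopologicalSpace X] (x : X) : Prop :=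
  (arms x).ncard = 1

/-- `x` is a branch point: it has at least three arms. -/
def IsBranchPt {X : Type*} [TopologicalSpace X] (x : X) : Prop :=
  3 ≤ (arms x).ncard

/-- `f` maps the set `A` homeomorphically onto its image. -/
def MapsHomeoOn {X : Type*} [TopologicalSpace X] (f : X → X) (A : Set X) : Prop :=
  Topology.IsEmbedding (A.restrict f)

/-- `f` is a local homeomorphism onto its image at `x`. -/
def IsLocalHomeoAt {X : Type*} [TopologicalSpace X] (f : X → X) (x : X) : Prop :=
  ∃ U : Set X, IsOpen U ∧ x ∈ U ∧ Topology.IsEmbedding (U.restrict f)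

/-- `g` sends the local arm at `x` represented by the global arm `C` to the local
arm at `g x` represented by `C'` (germ condition: some initial piece of `C` at `x`
is mapped into `C'`). -/
def MapsLocalArm {X : Type*} [TopologicalSpace X] (g : X → X) (x : X) (C C' : Set X) : Prop :=
  C ∈ arms x ∧ C' ∈ arms (g x) ∧ ∃ U ∈ nhds x, g '' (C ∩ U) ⊆ C'

/-- `z` is periodic under `f` with exact period `n`. -/
def ExactPeriod {Y : Type*} (f : Y → Y) (z : Y) (n : ℕ) : Prop :=
  1 ≤ n ∧ f^[n] z = z ∧ ∀ k, 1 ≤ k → k < n → f^[k] z ≠ z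

/-- The first return map `f^[n]` of the fixed point `z` of `f^[n]` permutes all the
local arms at `z` transitively in a single cycle. -/
def ArmsTransitive {X : Type*} [TopologicalSpace X] (f : X → X) (n : ℕ) (z : X) : Prop :=
  ∀ C ∈ arms z, ∀ C' ∈ arms z, ∃ j : ℕ, MapsLocalArm (f^[n * j]) z C C'

/-- An (abstract) Hubbard tree: a finite topological tree `X` together with a
continuous surjection `f` and a critical point `c0`, subject to the axioms of
Bruin–Schleicher. -/
structure HubbardTree (X : Type*) [TopologicalSpace X] : Type _ where
  /-- the dynamics -/
  f : X → X
  /-- the critical point -/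
  c0 : X
  compact : CompactSpace X
  t2 : T2Space X
  conn : ConnectedSpace X
  /-- the unique arc `[x,y]` joining two points -/
  arc : X → X → Set X
  arc_isArc : ∀ x y : X, IsArcBetween (arc x y) x y
  arc_unique : ∀ (x y : X) (A : Set X), IsArcBetween A x y → A = arc x y
  -- finiteness of the tree
  arms_finite : ∀ x : X, (arms x).Finite
  branch_finite : Set.Finite {x : X | IsBranchPt x}
  endpoint_finite : Set.Finite {x : X | IsEndpoint x}
  cont : Continuous f
  surj : Function.Surjective f
  /-- every point has at most two inverse images -/
  two_preimages : ∀ y : X, ∃ a b : X, f ⁻¹' {y} ⊆ {a, b}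
  /-- local homeomorphism onto its image away from the critical point -/
  local_homeo : ∀ x : X, x ≠ c0 → IsLocalHomeoAt f x
  /-- all endpoints lie on the critical orbit -/
  endpoints_on_orbit : ∀ x : X, IsEndpoint x → ∃ k : ℕ, f^[k] c0 = x
  /-- the critical point is periodic or preperiodic -/
  crit_preperiodic : ∃ k n : ℕ, 1 ≤ n ∧ f^[k + n] c0 = f^[k] c0
  /-- the critical point is not fixed -/
  crit_not_fixed : f c0 ≠ c0
  /-- expansivity -/
  expansive : ∀ x y : X, x ≠ y →
    (IsBranchPt x ∨ ∃ k : ℕ, f^[k] c0 = x) →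
    (IsBranchPt y ∨ ∃ k : ℕ, f^[k] c0 = y) →
    ∃ n : ℕ, c0 ∈ f^[n] '' (arc x y)

namespace HubbardTree

variable {X : Type*} [TopologicalSpace X] (H : HubbardTree X)

/-- The critical value `c₁ = f(c₀)`. -/
def c1 : X := H.f H.c0

/-- The component `T₁` of `T \ {c₀}` containing the critical value. -/
def T1 : Set X := connectedComponentIn {H.c0}ᶜ H.c1

open Classical in
/-- The symbol (`0`, `1` or `*`) attached to a point of the tree. -/
noncomputable def symOf (x : X) : Sym :=
  if x = H.c0 then Sym.star else if x ∈ H.T1 then Sym.one else Sym.zero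

/-- The itinerary of `x`: a sequence of symbols, 1-indexed (the value at index `0`
is irrelevant); entry `k ≥ 1` is the symbol of `f^[k-1] x`. -/
noncomputable def itin (x : X) : ℕ → Sym :=
  fun k => H.symOf (H.f^[k - 1] x)

/-- The kneading sequence: the itinerary of the critical value (1-indexed). -/
noncomputable def kneading : ℕ → Sym := H.itin H.c1

/-- `z` is the characteristic point of its periodic orbit: `c₁` lies in one
component of `X \ {z}` while `c₀` and all other points of the orbit lie in a
different component. -/
def IsCharacteristic (z : X) : Prop :=
  ∃ Cv Cz : Set X, Cv ∈ arms z ∧ Cz ∈ arms z ∧ Cv ≠ Cz ∧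
    H.c1 ∈ Cv ∧ H.c0 ∈ Cz ∧ ∀ k : ℕ, H.f^[k] z ≠ z → H.f^[k] z ∈ Cz

/-- The first return map fixes the local arm at `z` pointing to the critical point
and permutes all other local arms transitively in a single cycle. -/
def OtherArmsTransitive (n : ℕ) (z : X) : Prop :=
  ∀ C ∈ arms z, C ≠ armTo z H.c0 → ∀ C' ∈ arms z, C' ≠ armTo z H.c0 →
    ∃ j : ℕ, MapsLocalArm (H.f^[n * j]) z C C'

/-- `z` is the characteristic point of an evil periodic orbit of branch points of
exact period `n`. -/
def IsEvilOrbit (z : X) (n : ℕ) : Prop :=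
  ExactPeriod H.f z n ∧ (∀ k : ℕ, IsBranchPt (H.f^[k] z)) ∧
    H.IsCharacteristic z ∧ ¬ ArmsTransitive H.f n z

/-- `x` is precritical with `Step(x) = k`: `k ≥ 1` is minimal with `f^[k] x = c₁`. -/
def Step (x : X) (k : ℕ) : Prop :=
  1 ≤ k ∧ H.f^[k] x = H.c1 ∧ ∀ j, 1 ≤ j → j < k → H.f^[j] x ≠ H.c1

/-- `x` is the closest precritical point `ζ_k`. -/
def IsClosestPrecritical (x : X) (k : ℕ) : Prop :=
  H.Step x k ∧ ∀ j, 1 ≤ j → j < k → H.c1 ∉ H.f^[j] '' (H.arc H.c1 x)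

/-- `x` is the earliest precritical point on the set `A`, with `Step(x) = k`:
it is a precritical point on `A` of minimal Step. -/
def IsEarliestPrecriticalOn (A : Set X) (x : X) (k : ℕ) : Prop :=
  x ∈ A ∧ H.Step x k ∧ ∀ y ∈ A, ∀ j : ℕ, H.Step y j → k ≤ j

/-- Marked points: branch points and points of the critical orbit. -/
def MarkedPt (x : X) : Prop :=
  IsBranchPt x ∨ ∃ k : ℕ, H.f^[k] H.c0 = x

/-- Two marked points are joined by an edge if the arc between them contains no
further marked point. -/
def IsEdge (x y : X) : Prop :=
  H.MarkedPt x ∧ H.MarkedPt y ∧ x ≠ y ∧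
    ∀ w ∈ H.arc x y, H.MarkedPt w → w = x ∨ w = y

/-- Equivalence of Hubbard trees: a bijection between the marked points which
conjugates the dynamics and preserves edges. -/
def Equivalent {Y : Type*} [TopologicalSpace Y] (H' : HubbardTree Y) : Prop :=
  ∃ φ : X → Y,
    (∀ x : X, H.MarkedPt x → H'.MarkedPt (φ x)) ∧
    (∀ x x' : X, H.MarkedPt x → H.MarkedPt x' → φ x = φ x' → x = x') ∧
    (∀ y : Y, H'.MarkedPt y → ∃ x : X, H.MarkedPt x ∧ φ x = y) ∧
    φ H.c0 = H'.c0 ∧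
    (∀ x : X, H.MarkedPt x → φ (H.f x) = H'.f (φ x)) ∧
    (∀ x x' : X, H.MarkedPt x → H.MarkedPt x' →
      (H.IsEdge x x' ↔ H'.IsEdge (φ x) (φ x')))

end HubbardTree

/-! ### Combinatorics of kneading sequences -/

/-- The function `ρ_ν(n) = inf { k > n : ν_k ≠ ν_{k-n} } ∈ ℕ ∪ {∞}` (sequences are
1-indexed). -/
noncomputable def rho (ν : ℕ → Sym) (n : ℕ) : ℕ∞ :=
  sInf {e : ℕ∞ | ∃ j : ℕ, e = (j : ℕ∞) ∧ n < j ∧ ν j ≠ ν (j - n)}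

/-- `RhoOrbit ν k m` means that `m` belongs to the `ρ`-orbit
`k → ρ(k) → ρ(ρ(k)) → ⋯` of `k` (stopped before reaching `∞`). -/
inductive RhoOrbit (ν : ℕ → Sym) : ℕ → ℕ → Prop
  | refl (k : ℕ) : RhoOrbit ν k k
  | step {k m j : ℕ} : RhoOrbit ν k m → rho ν m = (j : ℕ∞) → RhoOrbit ν k j

/-- `m` occurs in the internal address `1 → ρ(1) → ρ(ρ(1)) → ⋯` of `ν`. -/
def InternalAddress (ν : ℕ → Sym) (m : ℕ) : Prop := RhoOrbit ν 1 m

/-- `ν` is a `*`-periodic kneading sequence of (exact) period `n`: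
`ν = overline(1 ν₂ … ν_{n-1} *)`. -/
def StarPeriodic (ν : ℕ → Sym) (n : ℕ) : Prop :=
  2 ≤ n ∧ ν 1 = Sym.one ∧ ν n = Sym.star ∧
    (∀ k, 1 ≤ k → ν (k + n) = ν k) ∧
    (∀ k, 1 ≤ k → k < n → ν k ≠ Sym.star)

/-- `ν` fails the admissibility condition for period `m`. -/
def FailsAdmissibility (ν : ℕ → Sym) (m : ℕ) : Prop :=
  1 ≤ m ∧
  ¬ InternalAddress ν m ∧
  (∀ k : ℕ, k ∣ m → 1 ≤ k → k < m → rho ν k ≤ (m : ℕ∞)) ∧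
  ∃ R r : ℕ, rho ν m = (R : ℕ∞) ∧ 1 ≤ r ∧ r ≤ m ∧ r ≡ R [MOD m] ∧ RhoOrbit ν r m

open Classical in
/-- The number `q(m)` of arms predicted by the kneading sequence, where
`ρ(m) = R < ∞` and `r ∈ {1,…,m}` is congruent to `R` modulo `m`. -/
noncomputable def qArms (ν : ℕ → Sym) (m R r : ℕ) : ℕ :=
  if RhoOrbit ν r m then (R - r) / m + 1 else (R - r) / m + 2


/-! ### Embeddings into the plane and cyclic order of arms -/

/-- Three points in the plane are in (strictly) counterclockwise position. -/
def Ccw (p q r : ℝ × ℝ) : Prop :=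
  0 < (q.1 - p.1) * (r.2 - p.2) - (q.2 - p.2) * (r.1 - p.1)

namespace HubbardTree

variable {X : Type*} [TopologicalSpace X] (H : HubbardTree X)

/-- Under an embedding `φ` of the tree into the plane, `p` is a first exit point of
the arm `C` at `x` through the circle of radius `ε` around `φ x`: `p = φ y` for a
point `y ∈ C` at distance exactly `ε`, such that the arc from `x` to `y` stays
within distance `< ε` before reaching `y`. -/
def ExitPt (φ : X → ℝ × ℝ) (x : X) (C : Set X) (ε : ℝ) (p : ℝ × ℝ) : Prop :=
  ∃ y ∈ C, φ y = p ∧ dist (φ x) p = ε ∧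
    ∀ z ∈ H.arc x y, z ≠ y → dist (φ x) (φ z) < ε

/-- The local arms at `x` represented by the arms `C, C', C''` are in
counterclockwise cyclic order under the embedding `φ`. -/
def ArmsCcw (φ : X → ℝ × ℝ) (x : X) (C C' C'' : Set X) : Prop :=
  ∃ ε₀ : ℝ, 0 < ε₀ ∧ ∀ ε : ℝ, 0 < ε → ε < ε₀ →
    ∀ p p' p'' : ℝ × ℝ, H.ExitPt φ x C ε p → H.ExitPt φ x C' ε p' →
      H.ExitPt φ x C'' ε p'' → Ccw p p' p''

/-- `f` respects the cyclic order (induced by the embedding `φ`) of the local arms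
at all branch points. -/
def RespectsCyclicOrder (φ : X → ℝ × ℝ) : Prop :=
  ∀ x : X, IsBranchPt x →
    ∀ C C' C'' : Set X, C ∈ arms x → C' ∈ arms x → C'' ∈ arms x →
      C ≠ C' → C' ≠ C'' → C ≠ C'' → H.ArmsCcw φ x C C' C'' →
      ∀ D D' D'' : Set X, MapsLocalArm H.f x C D → MapsLocalArm H.f x C' D' →
        MapsLocalArm H.f x C'' D'' → H.ArmsCcw φ (H.f x) D D' D''

/-- The Hubbard tree can be topologically embedded into the plane `ℝ²` so that `f`
respects the cyclic order of the local arms at all branch points. -/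
def PlanarEmbeddable : Prop :=
  ∃ φ : X → ℝ × ℝ, Topology.IsEmbedding φ ∧ H.RespectsCyclicOrder φ

end HubbardTree


section Aux
open Set Topology

variable {X : Type*} [TopologicalSpace X] (H : HubbardTree X)

namespace HubbardTree

lemma arc_image (g : ℝ → X) {a b : ℝ} (hab : a ≤ b) (hc : ContinuousOn g (Icc a b))
    (hi : InjOn g (Icc a b)) : H.arc (g a) (g b) = g '' Icc a b := by
  have := H.t2
  symm
  apply H.arc_unique
  rcases hab.eq_or_lt with rfl | hlt
  · left; simp
  · right
    refine ⟨fun h => hlt.ne (hi ⟨le_rfl, hab⟩ ⟨hab, le_rfl⟩ h), ?_⟩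
    have hm : ∀ t : unitInterval, a + (t : ℝ) * (b - a) ∈ Icc a b := fun t =>
      ⟨by nlinarith [t.2.1, t.2.2], by nlinarith [t.2.1, t.2.2]⟩
    have hcont : Continuous (fun t : unitInterval => g (a + (t : ℝ) * (b - a))) :=
      hc.comp_continuous (by fun_prop) hm
    let γ : Path (g a) (g b) :=
      { toFun := fun t => g (a + (t : ℝ) * (b - a))
        continuous_toFun := hcont
        source' := by simp
        target' := by simp }
    refine ⟨γ, ?_, ?_⟩
    · apply (hcont.isClosedEmbedding ?_).isEmbedding
      intro s t hst
      have := hi (hm s) (hm t) hst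
      have h2 : (s : ℝ) * (b - a) = t * (b - a) := by linarith
      exact Subtype.ext (mul_right_cancel₀ (by linarith) h2)
    · ext p
      constructor
      · rintro ⟨t, rfl⟩
        exact ⟨_, hm t, rfl⟩
      · rintro ⟨s, hs, rfl⟩
        have hpos : 0 < b - a := by linarith
        refine ⟨⟨(s - a) / (b - a), div_nonneg (by linarith [hs.1]) hpos.le,
          (div_le_one hpos).2 (by linarith [hs.2])⟩, ?_⟩
        change g (a + (s - a) / (b - a) * (b - a)) = g s
        congr 1
        field_simp
        ring

lemma param (x y : X) : ∃ (b : ℝ) (g : ℝ → X), 0 ≤ b ∧ Continuous g ∧ InjOn g (Icc 0 b) ∧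
    g 0 = x ∧ g b = y ∧ H.arc x y = g '' Icc 0 b := by
  rcases H.arc_isArc x y with ⟨rfl, h⟩ | ⟨hne, γ, hγ, hr⟩
  · exact ⟨0, fun _ => x, le_rfl, continuous_const, by simp, rfl, rfl, by simp [h]⟩
  · refine ⟨1, γ.extend, zero_le_one, γ.continuous_extend, ?_, by simp, by simp, ?_⟩
    · intro s hs t ht hst
      have h1 : γ ⟨s, hs⟩ = γ ⟨t, ht⟩ := by
        rw [← Path.extend_apply γ hs, ← Path.extend_apply γ ht]; exact hst
      simpa using hγ.injective h1
    · rw [← hr]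
      ext p
      constructor
      · rintro ⟨t, rfl⟩
        exact ⟨t, t.2, by simp⟩
      · rintro ⟨s, hs, rfl⟩
        exact ⟨⟨s, hs⟩, by rw [← Path.extend_apply γ hs]⟩

lemma arc_comm (x y : X) : H.arc x y = H.arc y x := by
  obtain ⟨b, g, hb, hc, hi, rfl, rfl, h⟩ := H.param x y
  have := H.arc_image (fun t => g (b - t)) hb (by fun_prop) (by
    intro s hs t ht hst
    have := hi (⟨by linarith [hs.2], by linarith [hs.1]⟩ : b - s ∈ Icc 0 b)
      (⟨by linarith [ht.2], by linarith [ht.1]⟩ : b - t ∈ Icc 0 b) hst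
    linarith)
  simp only [sub_zero, sub_self] at this
  rw [h, this]
  ext p
  constructor
  · rintro ⟨s, hs, rfl⟩
    exact ⟨b - s, ⟨by linarith [hs.2], by linarith [hs.1]⟩, by simp⟩
  · rintro ⟨s, hs, rfl⟩
    exact ⟨b - s, ⟨by linarith [hs.2], by linarith [hs.1]⟩, by simp⟩

lemma left_mem (x y : X) : x ∈ H.arc x y := by
  obtain ⟨b, g, hb, hc, hi, rfl, rfl, h⟩ := H.param x y
  rw [h]; exact ⟨0, ⟨le_rfl, hb⟩, rfl⟩

lemma right_mem (x y : X) : y ∈ H.arc x y := by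
  rw [arc_comm]; exact H.left_mem y x

lemma arc_closed (x y : X) : IsClosed (H.arc x y) := by
  have := H.t2
  obtain ⟨b, g, hb, hc, hi, rfl, rfl, h⟩ := H.param x y
  rw [h]; exact (isCompact_Icc.image hc).isClosed

lemma arc_preconn (x y : X) : IsPreconnected (H.arc x y) := by
  obtain ⟨b, g, hb, hc, hi, rfl, rfl, h⟩ := H.param x y
  rw [h]; exact isPreconnected_Icc.image _ hc.continuousOn

lemma arc_sub_param {g : ℝ → X} {b s t : ℝ} (hc : Continuous g) (hi : InjOn g (Icc 0 b))
    (hs : 0 ≤ s) (hst : s ≤ t) (ht : t ≤ b) : H.arc (g s) (g t) = g '' Icc s t :=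
  H.arc_image g hst hc.continuousOn (hi.mono (Icc_subset_Icc hs ht))

lemma arc_diff (x y : X) : ∃ (b : ℝ) (g : ℝ → X), 0 ≤ b ∧ Continuous g ∧ InjOn g (Icc 0 b) ∧
    g 0 = x ∧ g b = y ∧ H.arc x y \ {x} = g '' Ioc 0 b := by
  obtain ⟨b, g, hb, hc, hi, rfl, rfl, h⟩ := H.param x y
  refine ⟨b, g, hb, hc, hi, rfl, rfl, ?_⟩
  rw [h]
  ext p
  constructor
  · rintro ⟨⟨s, hs, rfl⟩, hne⟩
    refine ⟨s, ⟨lt_of_le_of_ne hs.1 ?_, hs.2⟩, rfl⟩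
    rintro rfl
    exact hne rfl
  · rintro ⟨s, hs, rfl⟩
    refine ⟨⟨s, ⟨hs.1.le, hs.2⟩, rfl⟩, fun h => ?_⟩
    have := hi ⟨hs.1.le, hs.2⟩ ⟨le_rfl, hb⟩ h
    linarith [hs.1]

lemma arc_diff_preconn (x y : X) : IsPreconnected (H.arc x y \ {x}) := by
  obtain ⟨b, g, hb, hc, hi, rfl, rfl, h⟩ := H.arc_diff x y
  rw [h]; exact isPreconnected_Ioc.image _ hc.continuousOn

lemma mem_closure_arc_diff {x y : X} (hxy : x ≠ y) : x ∈ closure (H.arc x y \ {x}) := by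
  obtain ⟨b, g, hb, hc, hi, rfl, rfl, h⟩ := H.arc_diff x y
  rw [h]
  have hb' : 0 < b := lt_of_le_of_ne hb (by rintro rfl; exact hxy rfl)
  apply image_closure_subset_closure_image hc
  refine ⟨0, ?_, rfl⟩
  rw [closure_Ioc hb'.ne]
  exact ⟨le_rfl, hb⟩

lemma arc_split {x y w : X} (hw : w ∈ H.arc x y) : H.arc x y = H.arc x w ∪ H.arc w y := by
  obtain ⟨b, g, hb, hc, hi, rfl, rfl, h⟩ := H.param x y
  rw [h] at hw
  obtain ⟨t, ht, rfl⟩ := hw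
  rw [h, H.arc_sub_param hc hi le_rfl ht.1 ht.2, H.arc_sub_param hc hi ht.1 ht.2 le_rfl,
    ← image_union, Icc_union_Icc_eq_Icc ht.1 ht.2]

lemma arc_inter {x y w : X} (hw : w ∈ H.arc x y) : H.arc x w ∩ H.arc w y ⊆ {w} := by
  obtain ⟨b, g, hb, hc, hi, rfl, rfl, h⟩ := H.param x y
  rw [h] at hw
  obtain ⟨t, ht, rfl⟩ := hw
  rw [H.arc_sub_param hc hi le_rfl ht.1 ht.2, H.arc_sub_param hc hi ht.1 ht.2 le_rfl]
  rintro _ ⟨⟨s, hs, rfl⟩, ⟨r, hr, hrs⟩⟩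
  have := hi ⟨ht.1.trans hr.1, hr.2⟩ ⟨hs.1, hs.2.trans ht.2⟩ hrs
  have : s = t := le_antisymm hs.2 (this ▸ hr.1)
  simp [this]

lemma arc_sub_left {x y w : X} (hw : w ∈ H.arc x y) : H.arc x w ⊆ H.arc x y := by
  rw [H.arc_split hw]; exact subset_union_left

lemma arc_sub_right {x y w : X} (hw : w ∈ H.arc x y) : H.arc w y ⊆ H.arc x y := by
  rw [H.arc_split hw]; exact subset_union_right

lemma arc_total {x y v w : X} (hv : v ∈ H.arc x y) (hw : w ∈ H.arc x y) :
    v ∈ H.arc x w ∨ w ∈ H.arc x v := by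
  obtain ⟨b, g, hb, hc, hi, rfl, rfl, h⟩ := H.param x y
  rw [h] at hw hv
  obtain ⟨t, ht, rfl⟩ := hw
  obtain ⟨s, hs, rfl⟩ := hv
  rw [H.arc_sub_param hc hi le_rfl ht.1 ht.2, H.arc_sub_param hc hi le_rfl hs.1 hs.2]
  rcases le_total s t with hst | hst
  · left; exact ⟨s, ⟨hs.1, hst⟩, rfl⟩
  · right; exact ⟨t, ⟨ht.1, hst⟩, rfl⟩

lemma left_not_mem {x y w : X} (hw : w ∈ H.arc x y) (hne : w ≠ x) : x ∉ H.arc w y := by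
  intro h
  exact hne (H.arc_inter hw ⟨H.left_mem x w, h⟩).symm

end HubbardTree

/-! arms -/

lemma mem_armTo {x y : X} (h : y ≠ x) : y ∈ armTo x y :=
  mem_connectedComponentIn h

lemma armTo_mem {x y : X} (h : y ≠ x) : armTo x y ∈ arms x := ⟨y, h, rfl⟩

lemma ne_of_mem_arm {x y : X} {C : Set X} (hC : C ∈ arms x) (h : y ∈ C) : y ≠ x := by
  obtain ⟨w, hw, rfl⟩ := hC
  exact connectedComponentIn_subset _ _ h

lemma arm_eq {x y : X} {C : Set X} (hC : C ∈ arms x) (h : y ∈ C) : C = armTo x y := by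
  obtain ⟨w, hw, rfl⟩ := hC
  exact connectedComponentIn_eq h

lemma arm_preconn {x : X} {C : Set X} (hC : C ∈ arms x) : IsPreconnected C := by
  obtain ⟨w, hw, rfl⟩ := hC
  exact isPreconnected_connectedComponentIn

lemma arm_nonempty {x : X} {C : Set X} (hC : C ∈ arms x) : C.Nonempty := by
  obtain ⟨w, hw, rfl⟩ := hC
  exact ⟨w, mem_connectedComponentIn hw⟩

lemma subset_armTo {x y : X} {S : Set X} (hS : IsPreconnected S) (hy : y ∈ S) (hx : x ∉ S) :
    S ⊆ armTo x y :=
  hS.subset_connectedComponentIn hy (by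
    intro p hp h
    rw [mem_singleton_iff] at h
    exact hx (h ▸ hp))

lemma arm_closure {x : X} {C : Set X} (hC : C ∈ arms x) : closure C ⊆ insert x C := by
  intro p hp
  by_cases hpx : p = x
  · exact Or.inl hpx
  right
  obtain ⟨w, hw⟩ := arm_nonempty hC
  have h1 : IsPreconnected (insert p C) :=
    (arm_preconn hC).subset_closure (subset_insert _ _)
      (insert_subset hp subset_closure)
  have h2 : insert p C ⊆ armTo x w := subset_armTo h1 (Or.inr hw) (by
    rintro (h | h)
    · exact hpx h.symm
    · exact ne_of_mem_arm hC h rfl)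
  rw [← arm_eq hC hw] at h2
  exact h2 (Or.inl rfl)

lemma arm_insert_closed [T1Space X] {x : X} {C : Set X} (hC : C ∈ arms x) :
    IsClosed (insert x C) := by
  rw [← closure_subset_iff_isClosed, insert_eq, closure_union, closure_singleton]
  exact union_subset subset_union_left (arm_closure hC)

lemma HubbardTree.arm_open (H : HubbardTree X) {x : X} {C : Set X} (hC : C ∈ arms x) : IsOpen C := by
  have := H.t2
  have : C = ({x} ∪ ⋃ D ∈ arms x \ {C}, closure D)ᶜ := by
    ext p
    constructor
    · rintro hp (h | h)
      · exact ne_of_mem_arm hC hp h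
      · simp only [mem_iUnion] at h
        obtain ⟨D, ⟨hD, hne⟩, hpD⟩ := h
        rcases arm_closure hD hpD with h | h
        · exact ne_of_mem_arm hC hp h
        · exact hne ((arm_eq hD h).trans (arm_eq hC hp).symm)
    · intro hp
      by_contra hpC
      have hpx : p ≠ x := fun h => hp (Or.inl h)
      apply hp
      right
      simp only [mem_iUnion]
      exact ⟨armTo x p, ⟨armTo_mem hpx, fun h => hpC (by rw [← h]; exact mem_armTo hpx)⟩,
        subset_closure (mem_armTo hpx)⟩
  rw [this, isOpen_compl_iff]
  apply isClosed_singleton.union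
  exact ((H.arms_finite x).subset sdiff_subset).isClosed_biUnion fun _ _ => isClosed_closure

namespace HubbardTree

lemma arc_diff_sub_armTo {x y : X} (h : y ≠ x) : H.arc x y \ {x} ⊆ armTo x y :=
  subset_armTo (H.arc_diff_preconn x y) ⟨H.right_mem x y, h⟩ (fun h => h.2 rfl)

lemma mem_closure_arm (H : HubbardTree X) {x : X} {C : Set X} (hC : C ∈ arms x) :
    x ∈ closure C := by
  obtain ⟨y, hy⟩ := arm_nonempty hC
  have hne := ne_of_mem_arm hC hy
  rw [arm_eq hC hy]
  exact closure_mono (H.arc_diff_sub_armTo hne) (H.mem_closure_arc_diff hne.symm)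

/-- key order lemma for the noncut point argument -/
lemma compl_armTo_sub (H : HubbardTree X) {x y w : X} (hyx : y ≠ x) (hw : w ∉ armTo y x)
    (hwy : w ≠ y) :
    insert y (armTo y x) ⊆ armTo w x := by
  have hC := armTo_mem (x := y) (y := x) hyx.symm
  apply subset_armTo
  · exact (arm_preconn hC).subset_closure (subset_insert _ _)
      (insert_subset (H.mem_closure_arm hC) subset_closure)
  · exact Or.inr (mem_armTo hyx.symm)
  · rintro (h | h)
    · exact hwy h
    · exact hw h

lemma structure_thm (x p : X) (hp : p ≠ x) : ∃ e, IsEndpoint e ∧ p ∈ H.arc x e := by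
  have := H.t2
  have := H.compact
  by_contra hcon
  let K : Set X := {k | k = x ∨ ∃ e, IsEndpoint e ∧ k ∈ H.arc x e}
  have hpK : p ∉ K := by
    rintro (h | h)
    · exact hp h
    · exact hcon h
  have hxK : x ∈ K := Or.inl rfl
  have hne : ∀ y ∉ K, y ≠ x := fun y hy h => hy (h ▸ hxK)
  have hKsub : ∀ y ∉ K, K ⊆ armTo y x := by
    intro y hy k hk
    rcases hk with rfl | ⟨e, he, hk⟩
    · exact mem_armTo (hne y hy).symm
    · exact subset_armTo (H.arc_preconn x e) (H.left_mem x e)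
        (fun h => hy (Or.inr ⟨e, he, h⟩)) hk
  let B : X → Set X := fun y => (armTo y x)ᶜ
  have hBc : ∀ y ∉ K, IsClosed (B y) := fun y hy =>
    (H.arm_open (armTo_mem (hne y hy).symm)).isClosed_compl
  have hBself : ∀ y ∉ K, y ∈ B y := fun y hy h =>
    ne_of_mem_arm (armTo_mem (hne y hy).symm) h rfl
  have hBK : ∀ y ∉ K, ∀ w ∈ B y, w ∉ K := fun y hy w hw hwK => hw (hKsub y hy hwK)
  have hBsub : ∀ y ∉ K, ∀ w ∈ B y, B w ⊆ B y := by
    intro y hy w hw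
    by_cases hwy : w = y
    · rw [hwy]
    · apply compl_subset_compl.2
      exact (subset_insert _ _).trans (H.compl_armTo_sub (hne y hy) hw hwy)
  have hBnot : ∀ y ∉ K, ∀ w ∈ B y, w ≠ y → y ∉ B w := by
    intro y hy w hw hwy h
    exact h (H.compl_armTo_sub (hne y hy) hw hwy (Or.inl rfl))
  have hBex : ∀ y ∉ K, ∃ w ∈ B y, w ≠ y := by
    intro y hy
    have hnot : ¬ IsEndpoint y := fun h => hy (Or.inr ⟨y, h, H.right_mem x y⟩)
    by_contra hall
    push Not at hall
    apply hnot
    unfold IsEndpoint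
    rw [Set.ncard_eq_one]
    refine ⟨armTo y x, ?_⟩
    ext C
    constructor
    · intro hC
      obtain ⟨w, hw⟩ := arm_nonempty hC
      have hwy := ne_of_mem_arm hC hw
      have : w ∈ armTo y x := by
        by_contra h
        exact hwy (hall w h)
      rw [mem_singleton_iff, arm_eq hC hw]
      exact (arm_eq (armTo_mem (hne y hy).symm) this).symm
    · rintro rfl
      exact armTo_mem (hne y hy).symm
  obtain ⟨M, hM⟩ := zorn_superset_nonempty {S | ∃ y ∉ K, S = B y} (by
    intro c hc hch hcne
    have hI : (⋂₀ c).Nonempty := by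
      have : Nonempty c := hcne.to_subtype
      apply IsCompact.nonempty_sInter_of_directed_nonempty_isCompact_isClosed
      · rintro S hS T hT
        rcases hch.total hS hT with h | h
        · exact ⟨S, hS, le_rfl, h⟩
        · exact ⟨T, hT, h, le_rfl⟩
      · intro S hS
        obtain ⟨y, hy, rfl⟩ := hc hS
        exact ⟨y, hBself y hy⟩
      · intro S hS
        obtain ⟨y, hy, rfl⟩ := hc hS
        exact (hBc y hy).isCompact
      · intro S hS
        obtain ⟨y, hy, rfl⟩ := hc hS
        exact hBc y hy
    obtain ⟨v, hv⟩ := hI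
    obtain ⟨S0, hS0⟩ := hcne
    obtain ⟨y0, hy0, rfl⟩ := hc hS0
    refine ⟨B v, ⟨v, hBK y0 hy0 v (hv _ hS0), rfl⟩, ?_⟩
    intro S hS
    obtain ⟨y, hy, rfl⟩ := hc hS
    exact hBsub y hy v (hv _ hS)) (B p) ⟨p, hpK, rfl⟩
  obtain ⟨-, hM⟩ := hM
  obtain ⟨y, hy, hMy⟩ := hM.prop
  obtain ⟨w, hw, hwy⟩ := hBex y hy
  have h1 : B w ⊆ M := hMy ▸ hBsub y hy w hw
  have h2 : M ⊆ B w := hM.le_of_le ⟨w, hBK y hy w hw, rfl⟩ h1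
  exact hBnot y hy w hw hwy (h2 (hMy ▸ hBself y hy))

/-- sharing an initial segment at `x` -/
def Share (x a b : X) : Prop := ∃ w, w ≠ x ∧ w ∈ H.arc x a ∧ w ∈ H.arc x b

lemma Share.symm {H : HubbardTree X} {x a b : X} (h : H.Share x a b) : H.Share x b a := by
  obtain ⟨w, h1, h2, h3⟩ := h
  exact ⟨w, h1, h3, h2⟩

lemma Share.trans {H : HubbardTree X} {x a b c : X} (h : H.Share x a b) (h' : H.Share x b c) :
    H.Share x a c := by
  obtain ⟨v, h1, h2, h3⟩ := h
  obtain ⟨w, k1, k2, k3⟩ := h'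
  rcases H.arc_total h3 k2 with h | h
  · exact ⟨v, h1, h2, H.arc_sub_left k3 h⟩
  · exact ⟨w, k1, H.arc_sub_left h2 h, k3⟩

lemma share_of_mem {x a b : X} (h : b ∈ H.arc x a) (hb : b ≠ x) : H.Share x b a :=
  ⟨b, hb, H.right_mem x b, h⟩

lemma share_of_armTo {x a b : X} (ha : a ≠ x) (hb : b ∈ armTo x a) : H.Share x a b := by
  have hbx := ne_of_mem_arm (armTo_mem ha) hb
  by_contra hns
  let F1 : Set X := ⋃ e ∈ {e | IsEndpoint e ∧ H.Share x a e}, H.arc x e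
  let F2 : Set X := ⋃ e ∈ {e | IsEndpoint e ∧ ¬ H.Share x a e}, H.arc x e
  have c1 : IsClosed F1 := (H.endpoint_finite.subset (fun e he => he.1)).isClosed_biUnion
    fun _ _ => H.arc_closed _ _
  have c2 : IsClosed F2 := (H.endpoint_finite.subset (fun e he => he.1)).isClosed_biUnion
    fun _ _ => H.arc_closed _ _
  have m1 : ∀ p, p ≠ x → (p ∈ F1 ↔ H.Share x a p) := by
    intro p hp
    simp only [F1, mem_iUnion, mem_ofPred_eq]
    constructor
    · rintro ⟨e, ⟨he, hs⟩, hpe⟩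
      exact hs.trans (H.share_of_mem hpe hp).symm
    · intro hs
      obtain ⟨e, he, hpe⟩ := H.structure_thm x p hp
      exact ⟨e, ⟨he, hs.trans (H.share_of_mem hpe hp)⟩, hpe⟩
  have m2 : ∀ p, p ≠ x → (p ∈ F2 ↔ ¬ H.Share x a p) := by
    intro p hp
    simp only [F2, mem_iUnion, mem_ofPred_eq]
    constructor
    · rintro ⟨e, ⟨he, hs⟩, hpe⟩ h
      exact hs (h.trans (H.share_of_mem hpe hp))
    · intro hs
      obtain ⟨e, he, hpe⟩ := H.structure_thm x p hp
      exact ⟨e, ⟨he, fun h => hs (h.trans (H.share_of_mem hpe hp).symm)⟩, hpe⟩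
  have hpre := arm_preconn (armTo_mem ha)
  rw [isPreconnected_closed_iff] at hpre
  obtain ⟨p, hp, hp1, hp2⟩ := hpre F1 F2 c1 c2 (by
    intro p hp
    have hpx := ne_of_mem_arm (armTo_mem ha) hp
    by_cases h : H.Share x a p
    · exact Or.inl ((m1 p hpx).2 h)
    · exact Or.inr ((m2 p hpx).2 h))
    ⟨a, mem_armTo ha, (m1 a ha).2 (H.share_of_mem (H.right_mem x a) ha)⟩
    ⟨b, hb, (m2 b hbx).2 hns⟩
  have hpx := ne_of_mem_arm (armTo_mem ha) hp
  exact (m2 p hpx).1 hp2 ((m1 p hpx).1 hp1)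

/-- Lemma D: near `x`, the arm towards `y` is contained in the arc. -/
lemma arm_germ {x y : X} (hy : y ≠ x) : ∃ U ∈ 𝓝 x, armTo x y ∩ U ⊆ H.arc x y := by
  have key : ∀ e, ∃ w, H.Share x y e → (w ≠ x ∧ w ∈ H.arc x y ∧ w ∈ H.arc x e) := by
    intro e
    by_cases h : H.Share x y e
    · obtain ⟨w, hw⟩ := h
      exact ⟨w, fun _ => hw⟩
    · exact ⟨x, fun h' => absurd h' h⟩
  choose w hw using key
  let F : Set X := ⋃ e ∈ {e | IsEndpoint e ∧ H.Share x y e}, H.arc (w e) e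
  have cF : IsClosed F := (H.endpoint_finite.subset (fun e he => he.1)).isClosed_biUnion
    fun _ _ => H.arc_closed _ _
  refine ⟨Fᶜ, cF.isOpen_compl.mem_nhds ?_, ?_⟩
  · intro hx
    simp only [F, mem_iUnion, mem_ofPred_eq] at hx
    obtain ⟨e, ⟨he, hs⟩, hxe⟩ := hx
    obtain ⟨h1, h2, h3⟩ := hw e hs
    exact H.left_not_mem h3 h1 hxe
  · rintro p ⟨hp, hpF⟩
    have hpx := ne_of_mem_arm (armTo_mem hy) hp
    have hs := H.share_of_armTo hy hp
    obtain ⟨e, he, hpe⟩ := H.structure_thm x p hpx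
    have hse := hs.trans (H.share_of_mem hpe hpx)
    obtain ⟨h1, h2, h3⟩ := hw e hse
    rw [H.arc_split h3] at hpe
    rcases hpe with h | h
    · exact H.arc_sub_left h2 h
    · exfalso
      apply hpF
      simp only [F, mem_iUnion, mem_ofPred_eq]
      exact ⟨e, ⟨he, hse⟩, h⟩

lemma arc_sub_arm {x a b : X} {C : Set X} (hC : C ∈ arms x) (ha : a ∈ insert x C)
    (hb : b ∈ insert x C) : H.arc a b ⊆ insert x C := by
  have one : ∀ {b}, b ∈ insert x C → H.arc x b ⊆ insert x C := by
    rintro b (rfl | hb) p hp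
    · have : H.arc b b = {b} := by
        rcases H.arc_isArc b b with h | h
        · exact h.2
        · exact absurd rfl h.1
      rw [this] at hp
      exact Or.inl hp
    · by_cases hpx : p = x
      · exact Or.inl hpx
      · right
        rw [arm_eq hC hb]
        exact H.arc_diff_sub_armTo (ne_of_mem_arm hC hb) ⟨hp, hpx⟩
  by_cases hx : x ∈ H.arc a b
  · rw [H.arc_split hx, H.arc_comm a x]
    exact union_subset (one ha) (one hb)
  · rcases ha with rfl | ha
    · exact absurd (H.left_mem _ _) hx
    · rw [arm_eq hC ha]
      exact (subset_armTo (H.arc_preconn a b) (H.left_mem a b) hx).trans (subset_insert _ _)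

/-! no simple closed curves, injectivity of `f` on arcs -/

lemma no_scc (H : HubbardTree X) {g : ℝ → X} {s t : ℝ} (hst : s < t)
    (hc : ContinuousOn g (Icc s t))
    (hi : InjOn g (Ico s t)) (h : g s = g t) : False := by
  have hi2 : InjOn g (Ioc s t) := by
    intro u hu v hv huv
    rcases hu.2.eq_or_lt with rfl | hut <;> rcases hv.2.eq_or_lt with rfl | hvt
    · rfl
    · have := hi ⟨le_rfl, hst⟩ ⟨hv.1.le, hvt⟩ (h.trans huv)
      linarith [hv.1]
    · have := hi ⟨hu.1.le, hut⟩ ⟨le_rfl, hst⟩ (huv.trans h.symm)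
      linarith [hu.1]
    · exact hi ⟨hu.1.le, hut⟩ ⟨hv.1.le, hvt⟩ huv
  set m := (s + t) / 2 with hm
  have e1 := H.arc_image g (a := s) (b := m) (by linarith)
    (hc.mono (Icc_subset_Icc le_rfl (by linarith)))
    (hi.mono (fun u (hu : u ∈ Icc s m) => (⟨hu.1, by linarith [hu.2]⟩ : u ∈ Ico s t)))
  have e2 := H.arc_image g (a := m) (b := t) (by linarith)
    (hc.mono (Icc_subset_Icc (by linarith) le_rfl))
    (hi2.mono (fun u (hu : u ∈ Icc m t) => (⟨by linarith [hu.1], hu.2⟩ : u ∈ Ioc s t)))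
  rw [H.arc_comm, ← h, e1] at e2
  have : g ((s + m) / 2) ∈ g '' Icc s m := ⟨_, ⟨by linarith, by linarith⟩, rfl⟩
  rw [e2] at this
  obtain ⟨u, hu, hgu⟩ := this
  have := hi2 ⟨by linarith [hu.1], hu.2⟩ ⟨by linarith, by linarith⟩ hgu
  linarith [hu.1]

lemma no_loop (H : HubbardTree X) {g : ℝ → X} {s t : ℝ} (hst : s < t) (hc : Continuous g)
    (hl : ∀ u ∈ Icc s t, ∃ V ∈ 𝓝 u, InjOn g (V ∩ Icc s t)) (h : g s = g t) : False := by
  have := H.t2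
  let P : Set (ℝ × ℝ) := {p | p.1 ∈ Icc s t ∧ p.2 ∈ Icc s t ∧ p.1 < p.2 ∧ g p.1 = g p.2}
  have hPc : IsCompact P := by
    have hsub : P ⊆ Icc s t ×ˢ Icc s t := fun p hp => ⟨hp.1, hp.2.1⟩
    apply (isCompact_Icc.prod isCompact_Icc).of_isClosed_subset _ hsub
    rw [← closure_subset_iff_isClosed]
    intro p hp
    have hcl : IsClosed {p : ℝ × ℝ | p.1 ∈ Icc s t ∧ p.2 ∈ Icc s t ∧ p.1 ≤ p.2 ∧ g p.1 = g p.2} :=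
      (isClosed_Icc.preimage continuous_fst).inter ((isClosed_Icc.preimage continuous_snd).inter
        ((isClosed_le continuous_fst continuous_snd).inter
          (isClosed_eq (hc.comp continuous_fst) (hc.comp continuous_snd))))
    have hp' := closure_minimal (fun p (hp : p ∈ P) =>
      (⟨hp.1, hp.2.1, hp.2.2.1.le, hp.2.2.2⟩ : p ∈ {p : ℝ × ℝ | p.1 ∈ Icc s t ∧ p.2 ∈ Icc s t ∧ p.1 ≤ p.2 ∧ g p.1 = g p.2})) hcl hp
    obtain ⟨q1, q2, q3, q4⟩ := hp'
    refine ⟨q1, q2, lt_of_le_of_ne q3 ?_, q4⟩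
    intro heq
    obtain ⟨V, hV, hVi⟩ := hl p.1 q1
    have hVV : V ×ˢ V ∈ 𝓝 p := by
      have : p = (p.1, p.1) := Prod.ext rfl heq.symm
      rw [this]
      exact prod_mem_nhds hV hV
    obtain ⟨r, hr, hrP⟩ := mem_closure_iff_nhds.1 hp _ hVV
    exact hrP.2.2.1.ne (hVi ⟨hr.1, hrP.1⟩ ⟨hr.2, hrP.2.1⟩ hrP.2.2.2)
  obtain ⟨p, hp, hmin⟩ := hPc.exists_isMinOn
    ⟨(s, t), ⟨le_rfl, hst.le⟩, ⟨hst.le, le_rfl⟩, hst, h⟩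
    (f := fun p : ℝ × ℝ => p.2 - p.1) (by fun_prop)
  refine H.no_scc hp.2.2.1 hc.continuousOn ?_ hp.2.2.2
  have main : ∀ u ∈ Ico p.1 p.2, ∀ v ∈ Ico p.1 p.2, u < v → g u = g v → False := by
    intro u hu v hv huv hg
    have := hmin (show (u, v) ∈ P from ⟨⟨hp.1.1.trans hu.1, hu.2.le.trans hp.2.1.2⟩,
      ⟨hp.1.1.trans hv.1, hv.2.le.trans hp.2.1.2⟩, huv, hg⟩)
    simp only [mem_ofPred_eq] at this
    linarith [hu.1, hv.2]
  intro u hu v hv hg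
  rcases lt_trichotomy u v with h | h | h
  · exact (main u hu v hv h hg).elim
  · exact h
  · exact (main v hv u hu h hg.symm).elim

lemma f_injOn_arc {x y : X} (h : H.c0 ∈ H.arc x y → H.c0 = y) : InjOn H.f (H.arc x y) := by
  obtain ⟨b, g, hb, hc, hi, rfl, rfl, he⟩ := H.param x y
  rw [he] at h ⊢
  have hgc : Continuous (H.f ∘ g) := H.cont.comp hc
  have hne : ∀ u ∈ Ico 0 b, g u ≠ H.c0 := by
    intro u hu hgu
    have := h ⟨u, ⟨hu.1, hu.2.le⟩, hgu⟩
    have := hi ⟨hu.1, hu.2.le⟩ ⟨hb, le_rfl⟩ (hgu.trans this)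
    linarith [hu.2]
  have h1 : ∀ s t, 0 ≤ s → s < t → t < b → H.f (g s) = H.f (g t) → False := by
    intro s t hs hst ht hg
    refine H.no_loop (g := H.f ∘ g) hst hgc ?_ hg
    intro u hu
    obtain ⟨U, hUo, hU, hUe⟩ := H.local_homeo (g u) (hne u ⟨hs.trans hu.1, hu.2.trans_lt ht⟩)
    refine ⟨g ⁻¹' U, (hUo.preimage hc).mem_nhds hU, ?_⟩
    intro v hv w hw hvw
    have hinj := hUe.injective
    have : (⟨g v, hv.1⟩ : U) = ⟨g w, hw.1⟩ := hinj hvw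
    have := congrArg Subtype.val this
    exact hi ⟨hs.trans hv.2.1, hv.2.2.trans ht.le⟩ ⟨hs.trans hw.2.1, hw.2.2.trans ht.le⟩ this
  have h2 : InjOn (H.f ∘ g) (Ico 0 b) := by
    intro u hu v hv hg
    rcases lt_trichotomy u v with h | h | h
    · exact (h1 u v hu.1 h hv.2 hg).elim
    · exact h
    · exact (h1 v u hv.1 h hu.2 hg.symm).elim
  have h3 : ∀ s t, 0 ≤ s → s < t → t ≤ b → H.f (g s) = H.f (g t) → False := by
    intro s t hs hst ht hg
    exact H.no_scc (g := H.f ∘ g) hst hgc.continuousOn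
      (h2.mono (fun u (hu : u ∈ Ico s t) => (⟨hs.trans hu.1, hu.2.trans_le ht⟩ : u ∈ Ico 0 b))) hg
  rintro _ ⟨u, hu, rfl⟩ _ ⟨v, hv, rfl⟩ hg
  rcases lt_trichotomy u v with h | h | h
  · exact (h3 u v hu.1 h hv.2 hg).elim
  · rw [h]
  · exact (h3 v u hv.1 h hu.2 hg.symm).elim

lemma image_arc {φ : X → X} (hφ : Continuous φ) {x y : X} (hi : InjOn φ (H.arc x y)) :
    φ '' H.arc x y = H.arc (φ x) (φ y) := by
  obtain ⟨b, g, hb, hc, hi', rfl, rfl, he⟩ := H.param x y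
  have := H.arc_image (φ ∘ g) hb (hφ.comp hc).continuousOn (by
    rw [he] at hi
    exact hi.comp hi' (fun u hu => ⟨u, hu, rfl⟩))
  rw [he, ← image_comp]
  exact this.symm

lemma iter_injOn_arc {x y : X} (m : ℕ) (h : ∀ j < m, H.c0 ∉ H.f^[j] '' H.arc x y) :
    InjOn (H.f^[m]) (H.arc x y) := by
  induction m with
  | zero => exact fun a _ b _ h => h
  | succ m ih =>
    have h1 := ih (fun j hj => h j (by omega))
    have h2 := H.image_arc (H.cont.iterate m) h1
    rw [Function.iterate_succ']
    refine InjOn.comp (t := H.f^[m] '' H.arc x y) ?_ h1 (mapsTo_image _ _)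
    rw [h2]
    apply H.f_injOn_arc
    intro hc
    rw [← h2] at hc
    exact absurd hc (h m (by omega))


/-! local arms -/

lemma mla_of_injOn {g : X → X} (hg : Continuous g) {x y : X} (hy : y ≠ x)
    (hi : InjOn g (H.arc x y)) : MapsLocalArm g x (armTo x y) (armTo (g x) (g y)) := by
  have hne : ∀ p ∈ H.arc x y, p ≠ x → g p ≠ g x := fun p hp hpx h =>
    hpx (hi hp (H.left_mem x y) h)
  refine ⟨armTo_mem hy, armTo_mem (hne y (H.right_mem x y) hy), ?_⟩
  obtain ⟨U, hU, hUs⟩ := H.arm_germ hy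
  refine ⟨U, hU, ?_⟩
  have h1 : g '' (H.arc x y \ {x}) ⊆ armTo (g x) (g y) := by
    apply subset_armTo
    · exact (H.arc_diff_preconn x y).image _ hg.continuousOn
    · exact ⟨y, ⟨H.right_mem x y, hy⟩, rfl⟩
    · rintro ⟨p, ⟨hp, hpx⟩, h⟩
      exact hne p hp hpx h
  refine Subset.trans (image_mono ?_) h1
  intro p hp
  exact ⟨hUs hp, ne_of_mem_arm (armTo_mem hy) hp.1⟩

lemma mla_unique (H : HubbardTree X) {g : X → X} {x : X} {C D E : Set X}
    (h1 : MapsLocalArm g x C D) (h2 : MapsLocalArm g x C E) : D = E := by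
  obtain ⟨hC, hD, U, hU, hUs⟩ := h1
  obtain ⟨-, hE, V, hV, hVs⟩ := h2
  obtain ⟨p, ⟨hpU, hpV⟩, hpC⟩ := mem_closure_iff_nhds.1 (H.mem_closure_arm hC) _
    (Filter.inter_mem hU hV)
  have a1 : g p ∈ D := hUs ⟨p, ⟨hpC, hpU⟩, rfl⟩
  have a2 : g p ∈ E := hVs ⟨p, ⟨hpC, hpV⟩, rfl⟩
  rw [arm_eq hD a1, arm_eq hE a2]

lemma mla_comp {g h : X → X} (hg : Continuous g) {x : X} {C D E : Set X}
    (h1 : MapsLocalArm g x C D) (h2 : MapsLocalArm h (g x) D E) :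
    MapsLocalArm (h ∘ g) x C E := by
  obtain ⟨hC, hD, U, hU, hUs⟩ := h1
  obtain ⟨-, hE, V, hV, hVs⟩ := h2
  refine ⟨hC, hE, U ∩ g ⁻¹' V, Filter.inter_mem hU (hg.continuousAt.preimage_mem_nhds hV), ?_⟩
  rintro _ ⟨p, ⟨hp, hpU, hpV⟩, rfl⟩
  exact hVs ⟨g p, ⟨hUs ⟨p, ⟨hp, hpU⟩, rfl⟩, hpV⟩, rfl⟩

lemma f_injOn_arc' {x y : X} (h : H.c0 ∈ H.arc x y → H.c0 = x ∨ H.c0 = y) :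
    InjOn H.f (H.arc x y) := by
  by_cases hx : H.c0 = x
  · rw [arc_comm]
    exact H.f_injOn_arc fun _ => hx
  · apply H.f_injOn_arc
    intro hc
    rcases h hc with h | h
    · exact absurd h hx
    · exact h

lemma arm_pick {x : X} {C : Set X} (hC : C ∈ arms x) :
    ∃ y ∈ C, H.c0 ∈ C → H.c0 = y := by
  by_cases h : H.c0 ∈ C
  · exact ⟨H.c0, h, fun _ => rfl⟩
  · obtain ⟨y, hy⟩ := arm_nonempty hC
    exact ⟨y, hy, fun h' => absurd h' h⟩

lemma arm_pick_inj {x y : X} {C : Set X} (hx : x ≠ H.c0) (hC : C ∈ arms x) (hy : y ∈ C)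
    (h : H.c0 ∈ C → H.c0 = y) : InjOn H.f (H.arc x y) := by
  apply H.f_injOn_arc
  intro hc
  rcases H.arc_sub_arm hC (Or.inl rfl) (Or.inr hy) hc with h' | h'
  · exact absurd h'.symm hx
  · exact h h'

lemma mla_exists {x : X} {C : Set X} (hx : x ≠ H.c0) (hC : C ∈ arms x) :
    ∃ D, MapsLocalArm H.f x C D := by
  obtain ⟨y, hy, h⟩ := H.arm_pick hC
  rw [arm_eq hC hy]
  exact ⟨_, H.mla_of_injOn H.cont (ne_of_mem_arm hC hy) (H.arm_pick_inj hx hC hy h)⟩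

lemma mla_inj {x : X} {C₁ C₂ D : Set X} (hx : x ≠ H.c0)
    (h1 : MapsLocalArm H.f x C₁ D) (h2 : MapsLocalArm H.f x C₂ D) : C₁ = C₂ := by
  by_contra hne
  have hC1 := h1.1
  have hC2 := h2.1
  have hdisj : ∀ p, p ∈ C₁ → p ∈ C₂ → False := fun p a b =>
    hne ((arm_eq hC1 a).trans (arm_eq hC2 b).symm)
  obtain ⟨y1, hy1, k1⟩ := H.arm_pick hC1
  obtain ⟨y2, hy2, k2⟩ := H.arm_pick hC2
  have i1 := H.arm_pick_inj hx hC1 hy1 k1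
  have i2 := H.arm_pick_inj hx hC2 hy2 k2
  have s1 := H.arc_sub_arm hC1 (Or.inl rfl) (Or.inr hy1)
  have s2 := H.arc_sub_arm hC2 (Or.inl rfl) (Or.inr hy2)
  have hxa : x ∈ H.arc y1 y2 := by
    by_contra h
    have := subset_armTo (H.arc_preconn y1 y2) (H.left_mem y1 y2) h (H.right_mem y1 y2)
    rw [← arm_eq hC1 hy1] at this
    exact hdisj _ this hy2
  have hsp := H.arc_split hxa
  rw [H.arc_comm y1 x] at hsp
  have hinj : InjOn H.f (H.arc y1 y2) := by
    apply H.f_injOn_arc'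
    intro hc
    rw [hsp] at hc
    rcases hc with hc | hc
    · rcases s1 hc with h | h
      · exact absurd h.symm hx
      · exact Or.inl (k1 h)
    · rcases s2 hc with h | h
      · exact absurd h.symm hx
      · exact Or.inr (k2 h)
  have m1 := H.mla_of_injOn H.cont (ne_of_mem_arm hC1 hy1) i1
  have m2 := H.mla_of_injOn H.cont (ne_of_mem_arm hC2 hy2) i2
  rw [← arm_eq hC1 hy1] at m1
  rw [← arm_eq hC2 hy2] at m2
  have e1 := H.mla_unique h1 m1
  have e2 := H.mla_unique h2 m2
  have n1 : H.f y1 ≠ H.f x := fun h =>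
    ne_of_mem_arm hC1 hy1 (i1 (H.right_mem _ _) (H.left_mem _ _) h)
  have n2 : H.f y2 ≠ H.f x := fun h =>
    ne_of_mem_arm hC2 hy2 (i2 (H.right_mem _ _) (H.left_mem _ _) h)
  have hmem : H.f y2 ∈ armTo (H.f x) (H.f y1) := by
    rw [← e1, e2]; exact mem_armTo n2
  obtain ⟨w, hw, w1, w2⟩ := H.share_of_armTo n1 hmem
  rw [← H.image_arc H.cont i1] at w1
  rw [← H.image_arc H.cont i2] at w2
  obtain ⟨p1, hp1, rfl⟩ := w1
  obtain ⟨p2, hp2, hpp⟩ := w2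
  have : p2 = p1 := hinj (by rw [hsp]; exact Or.inr hp2) (by rw [hsp]; exact Or.inl hp1) hpp
  subst this
  have hpx : p2 ≠ x := fun h => hw (by rw [h])
  exact hdisj p2 ((s1 hp1).resolve_left hpx) ((s2 hp2).resolve_left hpx)

lemma mla_iter_exists {z : X} (hz : ∀ j, H.f^[j] z ≠ H.c0) {C : Set X} (hC : C ∈ arms z) (m : ℕ) :
    ∃ D, MapsLocalArm (H.f^[m]) z C D := by
  induction m with
  | zero => exact ⟨C, hC, hC, univ, Filter.univ_mem, by simp⟩
  | succ m ih =>
    obtain ⟨D, hD⟩ := ih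
    obtain ⟨E, hE⟩ := H.mla_exists (hz m) hD.2.1
    refine ⟨E, ?_⟩
    rw [Function.iterate_succ']
    exact mla_comp (H.cont.iterate m) hD hE

lemma mla_iter_inj {z : X} (hz : ∀ j, H.f^[j] z ≠ H.c0) (m : ℕ) :
    ∀ {C₁ C₂ D : Set X}, MapsLocalArm (H.f^[m]) z C₁ D → MapsLocalArm (H.f^[m]) z C₂ D →
      C₁ = C₂ := by
  induction m with
  | zero =>
    intro C₁ C₂ D h1 h2
    have e1 : MapsLocalArm (H.f^[0]) z C₁ C₁ := ⟨h1.1, h1.1, univ, Filter.univ_mem, by simp⟩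
    have e2 : MapsLocalArm (H.f^[0]) z C₂ C₂ := ⟨h2.1, h2.1, univ, Filter.univ_mem, by simp⟩
    rw [H.mla_unique e1 h1, H.mla_unique e2 h2]
  | succ m ih =>
    intro C₁ C₂ D h1 h2
    obtain ⟨D1, hD1⟩ := H.mla_iter_exists hz h1.1 m
    obtain ⟨D2, hD2⟩ := H.mla_iter_exists hz h2.1 m
    obtain ⟨E1, hE1⟩ := H.mla_exists (hz m) hD1.2.1
    obtain ⟨E2, hE2⟩ := H.mla_exists (hz m) hD2.2.1
    have k1 := mla_comp (H.cont.iterate m) hD1 hE1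
    have k2 := mla_comp (H.cont.iterate m) hD2 hE2
    rw [← Function.iterate_succ'] at k1 k2
    have := H.mla_unique k1 h1
    have := H.mla_unique k2 h2
    subst E1 E2
    have := H.mla_inj (hz m) hE1 hE2
    subst this
    exact ih hD1 hD2

/-- consequences of being characteristic -/
structure CD (z : X) : Prop where
  c0z : H.c0 ≠ z
  c1z : H.c1 ≠ z
  ne : armTo z H.c0 ≠ armTo z H.c1
  orb : ∀ k : ℕ, H.f^[k] z ≠ z → H.f^[k] z ∈ armTo z H.c0
  z0 : ∀ k, H.f^[k] z ≠ H.c0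
  z1 : ∀ k, H.f^[k] z ≠ H.c1

lemma cd_of_char {z : X} (h : H.IsCharacteristic z) : H.CD z := by
  obtain ⟨Cv, Cz, hv, hz, hne, h1, h0, ho⟩ := h
  have e1 := arm_eq hv h1
  have e0 := arm_eq hz h0
  have c1z := ne_of_mem_arm hv h1
  have z1 : ∀ k, H.f^[k] z ≠ H.c1 := by
    intro k hk
    have := ho k (hk ▸ c1z)
    rw [hk] at this
    exact hne (e1.trans (arm_eq hz this).symm)
  refine ⟨ne_of_mem_arm hz h0, c1z, ?_, ?_, ?_, z1⟩
  · rw [← e0, ← e1]; exact hne.symm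
  · rw [← e0]; exact ho
  · intro k hk
    apply z1 (k + 1)
    rw [Function.iterate_succ_apply', hk]; rfl

variable {H} in
lemma CD.step0 {z : X} (h : H.CD z) {C E : Set X} {i : ℕ} (hM : MapsLocalArm (H.f^[i]) z C E)
    (hc : H.c0 ∈ E) : ∃ E, MapsLocalArm (H.f^[i+1]) z C E ∧
      ((∃ k, H.f^[k] z ≠ H.f^[i+1] z ∧ E = armTo (H.f^[i+1] z) (H.f^[k] z)) ∨
        (H.f^[i+1] z = z ∧ E = armTo z H.c1)) := by
  have hE := arm_eq hM.2.1 hc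
  have hm : MapsLocalArm H.f (H.f^[i] z) E (armTo (H.f (H.f^[i] z)) H.c1) := by
    rw [hE]
    exact H.mla_of_injOn H.cont (h.z0 i).symm (H.f_injOn_arc fun _ => rfl)
  have hm' := mla_comp (H.cont.iterate i) hM hm
  rw [← Function.iterate_succ', ← Function.iterate_succ_apply' H.f] at hm'
  refine ⟨_, hm', ?_⟩
  by_cases hz : H.f^[i+1] z = z
  · right
    exact ⟨hz, by rw [hz]⟩
  · left
    refine ⟨0, fun h => hz h.symm, ?_⟩
    have hmem : z ∈ H.arc (H.f^[i+1] z) H.c1 := by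
      by_contra hn
      have h1 := subset_armTo (H.arc_preconn _ _) (H.left_mem _ _) hn (H.right_mem _ _)
      have h2 := arm_eq (armTo_mem h.c0z) (h.orb _ hz)
      rw [← h2] at h1
      exact h.ne (arm_eq (armTo_mem h.c0z) h1)
    have := H.arc_diff_sub_armTo (h.z1 (i+1)).symm ⟨hmem, fun h => hz h.symm⟩
    exact arm_eq (armTo_mem (h.z1 (i+1)).symm) this

variable {H} in
lemma CD.step {z : X} (h : H.CD z) {C : Set X} {i : ℕ} (hz : H.f^[i] z ≠ z)
    (hQ : ∃ E, MapsLocalArm (H.f^[i]) z C E ∧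
      ((∃ k, H.f^[k] z ≠ H.f^[i] z ∧ E = armTo (H.f^[i] z) (H.f^[k] z)) ∨
        (H.f^[i] z = z ∧ E = armTo z H.c1))) : ∃ E, MapsLocalArm (H.f^[i+1]) z C E ∧
      ((∃ k, H.f^[k] z ≠ H.f^[i+1] z ∧ E = armTo (H.f^[i+1] z) (H.f^[k] z)) ∨
        (H.f^[i+1] z = z ∧ E = armTo z H.c1)) := by
  obtain ⟨E, hM, ⟨k, hk, hE⟩ | ⟨h', -⟩⟩ := hQ
  swap
  · exact absurd h' hz
  by_cases hc : H.c0 ∈ E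
  · exact h.step0 hM hc
  · have hinj : InjOn H.f (H.arc (H.f^[i] z) (H.f^[k] z)) := by
      apply H.f_injOn_arc
      intro hc'
      exact absurd (hE ▸ H.arc_diff_sub_armTo hk ⟨hc', (h.z0 i).symm⟩) hc
    have hm := H.mla_of_injOn H.cont hk hinj
    rw [← hE] at hm
    have hm' := mla_comp (H.cont.iterate i) hM hm
    rw [← Function.iterate_succ', ← Function.iterate_succ_apply' H.f,
      ← Function.iterate_succ_apply' H.f] at hm'
    refine ⟨_, hm', Or.inl ⟨k + 1, ?_, rfl⟩⟩
    intro he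
    rw [Function.iterate_succ_apply', Function.iterate_succ_apply'] at he
    exact hk (hinj (H.right_mem _ _) (H.left_mem _ _) he)

variable {H} in
lemma CD.hit {z : X} (h : H.CD z) {n : ℕ} (hn : ExactPeriod H.f z n) {C D : Set X} {j : ℕ}
    (hj : j < n) (hM : MapsLocalArm (H.f^[j]) z C D) (hc : H.c0 ∈ D) :
    ∃ E, MapsLocalArm (H.f^[n]) z C E ∧ (E = armTo z H.c0 ∨ E = armTo z H.c1) := by
  have key : ∀ i, j + 1 ≤ i → i ≤ n → ∃ E, MapsLocalArm (H.f^[i]) z C E ∧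
      ((∃ k, H.f^[k] z ≠ H.f^[i] z ∧ E = armTo (H.f^[i] z) (H.f^[k] z)) ∨
        (H.f^[i] z = z ∧ E = armTo z H.c1)) := by
    intro i hi
    induction i, hi using Nat.le_induction with
    | base => exact fun _ => h.step0 hM hc
    | succ i hi ih =>
      intro hin
      exact h.step (hn.2.2 i (by omega) (by omega)) (ih (by omega))
  obtain ⟨E, hE, ⟨k, hk, hEk⟩ | ⟨-, hE'⟩⟩ := key n hj le_rfl
  · refine ⟨E, hE, Or.inl ?_⟩
    rw [hn.2.1] at hk hEk
    rw [hEk]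
    exact (arm_eq (armTo_mem h.c0z) (h.orb k hk)).symm
  · exact ⟨E, hE, Or.inr hE'⟩

lemma arm_iter_inj {z : X} (hz : ∀ j, H.f^[j] z ≠ H.c0) {C : Set X} (hC : C ∈ arms z) {m : ℕ}
    (h : ∀ j < m, H.c0 ∉ H.f^[j] '' C) : InjOn (H.f^[m]) (insert z C) := by
  intro a ha b hb hab
  refine H.iter_injOn_arc m ?_ (H.left_mem a b) (H.right_mem a b) hab
  rintro j hj ⟨p, hp, hpc⟩
  rcases H.arc_sub_arm hC ha hb hp with rfl | hpC
  · exact hz j hpc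
  · exact h j hj ⟨p, hpC, hpc⟩

lemma arm_iter_sub {z : X} (hz : ∀ j, H.f^[j] z ≠ H.c0) {C D : Set X} {m : ℕ}
    (h : ∀ j < m, H.c0 ∉ H.f^[j] '' C) (hM : MapsLocalArm (H.f^[m]) z C D) :
    H.f^[m] '' C ⊆ D := by
  have hC := hM.1
  have hinj := H.arm_iter_inj hz hC h
  obtain ⟨y, hy⟩ := arm_nonempty hC
  have hnot : H.f^[m] z ∉ H.f^[m] '' C := by
    rintro ⟨p, hp, hpz⟩
    exact ne_of_mem_arm hC hp (hinj (Or.inr hp) (Or.inl rfl) hpz)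
  have hsub := subset_armTo ((arm_preconn hC).image _ (H.cont.iterate m).continuousOn)
    (mem_image_of_mem _ hy) hnot
  have hM' : MapsLocalArm (H.f^[m]) z C (armTo (H.f^[m] z) (H.f^[m] y)) :=
    ⟨hC, armTo_mem (fun h => hnot ⟨y, hy, h⟩), univ, Filter.univ_mem, by simpa using hsub⟩
  rw [H.mla_unique hM hM']
  exact hsub

variable {H} in
lemma CD.no_c0 {z : X} (h : H.CD z) {n : ℕ} (hn : ExactPeriod H.f z n) {C E : Set X}
    (hM : MapsLocalArm (H.f^[n]) z C E) (h0 : E ≠ armTo z H.c0) (h1 : E ≠ armTo z H.c1) :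
    ∀ j < n, H.c0 ∉ H.f^[j] '' C := by
  intro j
  induction j using Nat.strong_induction_on with
  | _ j ih =>
    intro hj hc
    obtain ⟨D, hD⟩ := H.mla_iter_exists h.z0 hM.1 j
    have := H.arm_iter_sub h.z0 (fun i hi => ih i hi (by omega)) hD
    obtain ⟨E', hE', hor⟩ := h.hit hn hj hD (this hc)
    rw [H.mla_unique hE' hM] at hor
    rcases hor with h | h
    · exact h0 h
    · exact h1 h

variable {H} in
lemma CD.reach {z : X} (h : H.CD z) (hb : IsBranchPt z) {C : Set X} (hC : C ∈ arms z) :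
    ∃ m D, MapsLocalArm (H.f^[m]) z C D ∧ H.c0 ∈ D := by
  classical
  obtain ⟨y, hy⟩ := arm_nonempty hC
  have hyz := ne_of_mem_arm hC hy
  obtain ⟨e, he, hye⟩ := H.structure_thm z y hyz
  have hez : e ≠ z := by
    rintro rfl
    rcases H.arc_isArc e e with h | h
    · rw [h.2] at hye; exact hyz hye
    · exact h.1 rfl
  have heC : C = armTo z e := by
    rw [arm_eq hC hy]
    exact (arm_eq (armTo_mem hez) (H.arc_diff_sub_armTo hez ⟨hye, hyz⟩)).symm
  have hex := H.expansive z e hez.symm (Or.inl hb) (Or.inr (H.endpoints_on_orbit e he))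
  have hmin := fun j (hj : j < Nat.find hex) => Nat.find_min hex hj
  have hsp := Nat.find_spec hex
  set m := Nat.find hex
  have hinj := H.iter_injOn_arc m hmin
  have hM := H.mla_of_injOn (H.cont.iterate m) hez hinj
  refine ⟨m, _, heC ▸ hM, ?_⟩
  rw [H.image_arc (H.cont.iterate m) hinj] at hsp
  refine H.arc_diff_sub_armTo ?_ ⟨hsp, (h.z0 m).symm⟩
  exact fun he => hez (hinj (H.right_mem _ _) (H.left_mem _ _) he)

lemma homeo (H : HubbardTree X) {g : X → X} (hg : Continuous g) {z : X} {C : Set X} (hC : C ∈ arms z)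
    (hi : InjOn g (insert z C)) : MapsHomeoOn g C := by
  have := H.t2
  have := H.compact
  have hcl : IsClosed (insert z C) := arm_insert_closed hC
  have hcs : CompactSpace (insert z C : Set X) := isCompact_iff_compactSpace.1 hcl.isCompact
  have h1 : IsEmbedding (fun p : (insert z C : Set X) => g p) :=
    ((hg.comp continuous_subtype_val).isClosedEmbedding (injOn_iff_injective.1 hi)).isEmbedding
  have h2 : IsEmbedding (inclusion (subset_insert z C)) := IsEmbedding.inclusion _
  exact h1.comp h2

end HubbardTree

open Function in
lemma comb {A : Type*} [Finite A] (π : A → A) (hi : Injective π) (a v : A) (hav : a ≠ v)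
    (h0 : π a = a ∨ π a = v) (hr : ∀ C, ∃ j, π^[j] C = a ∨ π^[j] C = v) :
    ∃ G : ℕ → A, G 0 = a ∧ G 1 = v ∧
      (∀ i j, i < Nat.card A → j < Nat.card A → G i = G j → i = j) ∧
      (∀ C, ∃ i < Nat.card A, C = G i) ∧
      (∀ i, 1 ≤ i → π (G i) = G (i + 1)) ∧
      (π a = v → π (G (Nat.card A - 1)) = a) ∧
      (π a = a → π (G (Nat.card A - 1)) = v) ∧
      (π a = v → ∀ C C', ∃ j, π^[j] C = C') := by
  classical
  set p := minimalPeriod π v with hp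
  have hper : v ∈ periodicPts π := hi.mem_periodicPts v
  have hp0 : 0 < p := minimalPeriod_pos_of_mem_periodicPts hper
  have hpv : π^[p] v = v := isPeriodicPt_minimalPeriod π v
  have hinj : ∀ i j, i < p → j < p → π^[i] v = π^[j] v → i = j := fun i j hi' hj' h =>
    iterate_injOn_Iio_minimalPeriod hi' hj' h
  have hback : ∀ C j, π^[j] C = v → ∃ i < p, C = π^[i] v := by
    intro C j hj
    refine ⟨(j * p - j) % p, Nat.mod_lt _ hp0, ?_⟩
    rw [iterate_mod_minimalPeriod_eq]
    apply hi.iterate j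
    rw [hj, ← iterate_add_apply, Nat.add_sub_cancel' (Nat.le_mul_of_pos_right j hp0)]
    exact ((isPeriodicPt_minimalPeriod π v).const_mul j).symm
  let G : ℕ → A := fun i => if i = 0 then a else π^[i - 1] v
  have G0 : G 0 = a := rfl
  have GS : ∀ i, G (i + 1) = π^[i] v := fun i => by simp [G]
  have hcard : ∀ q, (∀ i j, i < q → j < q → G i = G j → i = j) → (∀ C, ∃ i < q, C = G i) →
      Nat.card A = q := by
    intro q h1 h2
    have : Bijective (fun i : Fin q => G i) :=
      ⟨fun i j h => Fin.ext (h1 i j i.2 j.2 h), fun C => by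
        obtain ⟨i, hi, h⟩ := h2 C
        exact ⟨⟨i, hi⟩, h.symm⟩⟩
    rw [← Nat.card_eq_of_bijective _ this]
    simp
  have hstep : ∀ i, 1 ≤ i → π (G i) = G (i + 1) := by
    intro i hi1
    obtain ⟨i, rfl⟩ := Nat.exists_eq_add_of_le' hi1
    rw [GS, GS, iterate_succ_apply']
  rcases h0 with h0 | h0
  · have hne : ∀ i, π^[i] v ≠ a := by
      intro i h
      have : π^[i] a = a := iterate_fixed h0 i
      exact hav (hi.iterate i (h.trans this.symm)).symm
    have i1 : ∀ i j, i < p + 1 → j < p + 1 → G i = G j → i = j := by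
      intro i j hi' hj' h
      rcases i with _ | i <;> rcases j with _ | j
      · rfl
      · rw [G0, GS] at h; exact absurd h.symm (hne j)
      · rw [G0, GS] at h; exact absurd h (hne i)
      · rw [GS, GS] at h
        rw [hinj i j (by omega) (by omega) h]
    have i2 : ∀ C, ∃ i < p + 1, C = G i := by
      intro C
      obtain ⟨j, h | h⟩ := hr C
      · refine ⟨0, by omega, ?_⟩
        exact hi.iterate j (h.trans (iterate_fixed h0 j).symm)
      · obtain ⟨i, hip, h⟩ := hback C j h
        exact ⟨i + 1, by omega, by rw [GS, h]⟩
    have hq := hcard _ i1 i2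
    rw [hq]
    have habs : π a = v → False := fun h => hav (h0.symm.trans h)
    refine ⟨G, G0, by simp [G], i1, i2, hstep, fun h => (habs h).elim, fun _ => ?_,
      fun h => (habs h).elim⟩
    rw [Nat.add_sub_cancel, hstep p hp0, GS, hpv]
  · have ha : π^[p - 1] v = a := by
      apply hi
      rw [← iterate_succ_apply' π, Nat.succ_eq_add_one, Nat.sub_add_cancel hp0, hpv, h0]
    have hall : ∀ C, ∃ i < p, C = π^[i] v := by
      intro C
      obtain ⟨j, h | h⟩ := hr C
      · exact hback C (j + 1) (by rw [iterate_succ_apply', h, h0])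
      · exact hback C j h
    have hp1 : p ≠ 1 := by
      intro h
      rw [h] at ha
      exact hav ha.symm
    have i1 : ∀ i j, i < p → j < p → G i = G j → i = j := by
      intro i j hi' hj' h
      rcases i with _ | i <;> rcases j with _ | j
      · rfl
      · rw [G0, GS, ← ha] at h
        have := hinj _ _ (by omega) (by omega) h
        omega
      · rw [G0, GS, ← ha] at h
        have := hinj _ _ (by omega) (by omega) h
        omega
      · rw [GS, GS] at h
        rw [hinj i j (by omega) (by omega) h]
    have i2 : ∀ C, ∃ i < p, C = G i := by
      intro C
      obtain ⟨i, hip, rfl⟩ := hall C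
      by_cases h : i = p - 1
      · exact ⟨0, hp0, by rw [h, ha, G0]⟩
      · exact ⟨i + 1, by omega, by rw [GS]⟩
    have hq := hcard _ i1 i2
    rw [hq]
    refine ⟨G, G0, by simp [G], i1, i2, hstep, fun _ => ?_,
      fun h => (hav (h.symm.trans h0)).elim, fun _ C C' => ?_⟩
    · rw [hstep (p - 1) (by omega), GS, ha]
    · obtain ⟨i, hip, rfl⟩ := hall C
      obtain ⟨i', hip', rfl⟩ := hall C'
      refine ⟨i' + (p - i), ?_⟩
      rw [← iterate_add_apply, show i' + (p - i) + i = i' + p by omega, iterate_add_apply, hpv]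

end Aux

/-- Lemma 3.6, "Global Arms at Branch Points Map Homeomorphically".
The global arms at the characteristic point of a periodic orbit of branch points of
exact period `n` with `q ≥ 3` arms can be labelled `G 0, …, G (q-1)` with
`c₀ ∈ G 0`, `c₁ ∈ G 1`, the arms `G 1, …, G (q-2)` mapping homeomorphically into
`G 2, …, G (q-1)` respectively; in the tame case `f^[n]` sends the local arm `L 0`
to `L 1` and `L (q-1)` to `L 0`, and in the evil case it fixes `L 0`, sends
`L (q-1)` to `L 1`, and some iterate `f^[k] (G (q-1))`, `k ≤ n`, contains the
critical point. In particular, if the critical orbit is periodic, its period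
strictly exceeds the period of the branch orbit. -/
theorem global_arms_at_branch_points
    {X : Type*} [TopologicalSpace X] (H : HubbardTree X) (z : X) (n q : ℕ)
    (hchar : H.IsCharacteristic z) (hper : ExactPeriod H.f z n)
    (hbranch : ∀ k : ℕ, IsBranchPt (H.f^[k] z))
    (harms : ∀ k : ℕ, (arms (H.f^[k] z)).ncard = q) (hq : 3 ≤ q) :
    (∃ G : ℕ → Set X,
      (∀ i : ℕ, i < q → G i ∈ arms z) ∧
      (∀ i j : ℕ, i < q → j < q → G i = G j → i = j) ∧
      (∀ C ∈ arms z, ∃ i : ℕ, i < q ∧ C = G i) ∧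
      H.c0 ∈ G 0 ∧ H.c1 ∈ G 1 ∧
      (∀ i : ℕ, 1 ≤ i → i ≤ q - 2 →
        MapsHomeoOn (H.f^[n]) (G i) ∧ H.f^[n] '' G i ⊆ G (i + 1)) ∧
      (ArmsTransitive H.f n z →
        MapsLocalArm (H.f^[n]) z (G 0) (G 1) ∧
        MapsLocalArm (H.f^[n]) z (G (q - 1)) (G 0)) ∧
      (¬ ArmsTransitive H.f n z →
        MapsLocalArm (H.f^[n]) z (G 0) (G 0) ∧
        MapsLocalArm (H.f^[n]) z (G (q - 1)) (G 1) ∧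
        ∃ k : ℕ, k ≤ n ∧ H.c0 ∈ H.f^[k] '' (G (q - 1)))) ∧
    (∀ p : ℕ, ExactPeriod H.f H.c0 p → n < p) := by
  have hcd := H.cd_of_char hchar
  have hn1 : 1 ≤ n := hper.1
  have hnz : H.f^[n] z = z := hper.2.1
  have hbz : IsBranchPt z := hbranch 0
  have hex : ∀ C : arms z, ∃ D : arms z, MapsLocalArm (H.f^[n]) z C.1 D.1 := by
    intro C
    obtain ⟨D, hD⟩ := H.mla_iter_exists hcd.z0 C.2 n
    have := hD.2.1
    rw [hnz] at this
    exact ⟨⟨D, this⟩, hD⟩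
  choose π hπ using hex
  have hfin : Finite (arms z) := (H.arms_finite z).to_subtype
  have hπi : Function.Injective π := by
    intro C D h
    have h1 := hπ C
    rw [h] at h1
    exact Subtype.ext (H.mla_iter_inj hcd.z0 n h1 (hπ D))
  have hna : ∀ a, H.f^[n * a] z = z := by
    intro a
    rw [Function.iterate_mul]
    exact Function.iterate_fixed hnz a
  have hπa : ∀ (C : arms z) (a : ℕ), MapsLocalArm (H.f^[n * a]) z C.1 (π^[a] C).1 := by
    intro C a
    induction a with
    | zero => exact ⟨C.2, C.2, Set.univ, Filter.univ_mem, by simp⟩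
    | succ a ih =>
      have h1 := hπ (π^[a] C)
      have h2 : MapsLocalArm (H.f^[n]) (H.f^[n * a] z) (π^[a] C).1 (π (π^[a] C)).1 := by
        rw [hna]; exact h1
      have h3 := HubbardTree.mla_comp (H.cont.iterate (n * a)) ih h2
      rw [← Function.iterate_add, show n + n * a = n * (a + 1) by ring] at h3
      rw [Function.iterate_succ_apply']
      exact h3
  let L0 : arms z := ⟨armTo z H.c0, armTo_mem hcd.c0z⟩
  let Lv : arms z := ⟨armTo z H.c1, armTo_mem hcd.c1z⟩
  have hne : L0 ≠ Lv := fun h => hcd.ne (congrArg Subtype.val h)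
  have hhit : ∀ (C : arms z) (j : ℕ) (D : Set X), j < n → MapsLocalArm (H.f^[j]) z C.1 D →
      H.c0 ∈ D → π C = L0 ∨ π C = Lv := by
    intro C j D hj hM hc
    obtain ⟨E, hE, h⟩ := hcd.hit hper hj hM hc
    rw [H.mla_unique hE (hπ C)] at h
    rcases h with h | h
    · exact Or.inl (Subtype.ext h)
    · exact Or.inr (Subtype.ext h)
  have h0 : π L0 = L0 ∨ π L0 = Lv :=
    hhit L0 0 L0.1 hn1 ⟨L0.2, L0.2, Set.univ, Filter.univ_mem, by simp⟩ (mem_armTo hcd.c0z)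
  have hr : ∀ C, ∃ j, π^[j] C = L0 ∨ π^[j] C = Lv := by
    intro C
    obtain ⟨m, D, hM, hc⟩ := hcd.reach hbz C.2
    refine ⟨m / n + 1, ?_⟩
    rw [Function.iterate_succ_apply']
    obtain ⟨E, hE⟩ := H.mla_iter_exists hcd.z0 (π^[m / n] C).2 (m % n)
    have hE' : MapsLocalArm (H.f^[m % n]) (H.f^[n * (m / n)] z) (π^[m / n] C).1 E := by
      rw [hna]; exact hE
    have h3 := HubbardTree.mla_comp (H.cont.iterate (n * (m / n))) (hπa C (m / n)) hE'
    rw [← Function.iterate_add, Nat.mod_add_div] at h3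
    refine hhit _ (m % n) E (Nat.mod_lt _ hn1) hE ?_
    rw [H.mla_unique h3 hM]
    exact hc
  obtain ⟨G, hG0, hG1, hGi, hGs, hGstep, hB, hA, htr⟩ := comb π hπi L0 Lv hne h0 hr
  have hq' : Nat.card (arms z) = q := by
    rw [Nat.card_coe_set_eq]; exact harms 0
  rw [hq'] at hGi hGs hB hA
  have hmid : ∀ i, 1 ≤ i → i ≤ q - 2 → ∀ j < n, H.c0 ∉ H.f^[j] '' (G i).1 := by
    intro i h1 h2
    have h := hπ (G i)
    rw [hGstep i h1] at h
    apply hcd.no_c0 hper h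
    · intro h
      have : G (i + 1) = G 0 := by rw [hG0]; exact Subtype.ext h
      have := hGi _ _ (by omega) (by omega) this
      omega
    · intro h
      have : G (i + 1) = G 1 := by rw [hG1]; exact Subtype.ext h
      have := hGi _ _ (by omega) (by omega) this
      omega
  refine ⟨⟨fun i => (G i).1, fun i _ => (G i).2, ?_, ?_, ?_, ?_, ?_, ?_, ?_⟩, ?_⟩
  · intro i j hi hj h
    exact hGi i j hi hj (Subtype.ext h)
  · intro C hC
    obtain ⟨i, hi, h⟩ := hGs ⟨C, hC⟩
    exact ⟨i, hi, congrArg Subtype.val h⟩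
  · simp only [hG0]; exact mem_armTo hcd.c0z
  · simp only [hG1]; exact mem_armTo hcd.c1z
  · intro i h1 h2
    have hno := hmid i h1 h2
    have hM := hπ (G i)
    rw [hGstep i h1] at hM
    exact ⟨H.homeo (H.cont.iterate n) (G i).2 (H.arm_iter_inj hcd.z0 (G i).2 hno),
      H.arm_iter_sub hcd.z0 hno hM⟩
  · intro hT
    have hv : π L0 = Lv := by
      rcases h0 with h | h
      · exfalso
        obtain ⟨j, hj⟩ := hT L0.1 L0.2 Lv.1 Lv.2
        have h2 := H.mla_unique hj (hπa L0 j)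
        rw [Function.iterate_fixed h] at h2
        exact hne (Subtype.ext h2.symm)
      · exact h
    constructor
    · have := hπ (G 0)
      rw [hG0, hv, ← hG1, ← hG0] at this
      exact this
    · have := hπ (G (q - 1))
      rw [hB hv, ← hG0] at this
      exact this
  · intro hT
    have ha : π L0 = L0 := by
      rcases h0 with h | h
      · exact h
      · exfalso
        apply hT
        intro C hC C' hC'
        obtain ⟨j, hj⟩ := htr h ⟨C, hC⟩ ⟨C', hC'⟩
        have := hπa ⟨C, hC⟩ j
        rw [hj] at this
        exact ⟨j, this⟩
    refine ⟨?_, ?_, ?_⟩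
    · have := hπ (G 0)
      rw [hG0, ha, ← hG0] at this
      exact this
    · have := hπ (G (q - 1))
      rw [hA ha, ← hG1] at this
      exact this
    · by_contra hcon
      push Not at hcon
      have hall : ∀ i, 1 ≤ i → i ≤ q - 1 → ∀ j < n, H.c0 ∉ H.f^[j] '' (G i).1 := by
        intro i h1 h2
        by_cases h : i = q - 1
        · rw [h]
          exact fun j hj => hcon j hj.le
        · exact hmid i h1 (by omega)
      have hret : ∀ i, 1 ≤ i → i ≤ q - 1 → ∃ i', 1 ≤ i' ∧ i' ≤ q - 1 ∧
          H.f^[n] '' (G i).1 ⊆ (G i').1 := by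
        intro i h1 h2
        have hs := H.arm_iter_sub hcd.z0 (hall i h1 h2) (hπ (G i))
        by_cases h : i = q - 1
        · refine ⟨1, le_rfl, by omega, ?_⟩
          rw [h, hA ha, ← hG1] at hs
          rw [h]
          exact hs
        · rw [hGstep i h1] at hs
          exact ⟨i + 1, by omega, by omega, hs⟩
      have hit : ∀ a : ℕ, ∃ i, 1 ≤ i ∧ i ≤ q - 1 ∧ H.f^[n * a] '' (G 1).1 ⊆ (G i).1 := by
        intro a
        induction a with
        | zero => exact ⟨1, le_rfl, by omega, by simp⟩
        | succ a ih =>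
          obtain ⟨i, h1, h2, hs⟩ := ih
          obtain ⟨i', h1', h2', hs'⟩ := hret i h1 h2
          refine ⟨i', h1', h2', ?_⟩
          rw [show n * (a + 1) = n + n * a by ring, Function.iterate_add, Set.image_comp]
          exact (Set.image_mono hs).trans hs'
      obtain ⟨m, hm⟩ := H.expansive z H.c1 hcd.c1z.symm (Or.inl hbz) (Or.inr ⟨1, rfl⟩)
      obtain ⟨p, hp, hpc⟩ := hm
      have hpG : p ∈ (G 1).1 := by
        have hc1 : H.c1 ∈ (G 1).1 := by rw [hG1]; exact mem_armTo hcd.c1z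
        rcases H.arc_sub_arm (G 1).2 (Or.inl rfl) (Or.inr hc1) hp with h | h
        · exact absurd (h ▸ hpc) (hcd.z0 m)
        · exact h
      obtain ⟨i, h1, h2, hs⟩ := hit (m / n)
      apply hall i h1 h2 (m % n) (Nat.mod_lt _ hn1)
      refine ⟨H.f^[n * (m / n)] p, hs ⟨p, hpG, rfl⟩, ?_⟩
      rw [← Function.iterate_add_apply, Nat.mod_add_div]
      exact hpc
  · intro p hp
    by_contra hle
    push Not at hle
    refine hmid 1 le_rfl (by omega) (p - 1) (by have := hp.1; omega) ⟨H.c1, ?_, ?_⟩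
    · rw [hG1]; exact mem_armTo hcd.c1z
    · have h1 := hp.2.1
      obtain ⟨k, rfl⟩ := Nat.exists_eq_add_of_le' hp.1
      rw [Function.iterate_succ_apply] at h1
      exact h1

end HubbardTrees
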